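/- Let f ∈ BV(ℝ) and let (f_j) ⊂ BV(ℝ) with ‖f_j − f‖_{BV} → 0. Let E = {x : M̃f(x) > |f|‾(x)}. Then ∫_E |(M̃f_j)' − (M̃f)'| → 0 as j → ∞. -/

import Mathlib

open MeasureTheory Filter Set Topology

/-- Average of |f| over the interval (a,b). -/
noncomputable def mAvg (f : ℝ → ℝ) (a b : ℝ) : ℝ := (∫ t in a..b, |f t|) / (b - a)

/-- Uncentered Hardy–Littlewood maximal function. -/
noncomputable def uMax (f : ℝ → ℝ) (x : ℝ) : ℝ :=
  sSup {y | ∃ a b : ℝ, a < b ∧ a ≤ x ∧ x ≤ b ∧ y = mAvg f a b}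

/-- f has bounded variation on ℝ. -/
def BVfun (f : ℝ → ℝ) : Prop := BoundedVariationOn f Set.univ

/-- Total variation of f over a set, as a real number. -/
noncomputable def varOn (f : ℝ → ℝ) (s : Set ℝ) : ℝ := (eVariationOn f s).toReal

/-- BV norm: |f(-∞)| + Var(f). -/
noncomputable def bvNorm (f : ℝ → ℝ) : ℝ :=
  |limUnder Filter.atBot f| + varOn f Set.univ

/-- Upper precise representative: limsup over intervals I ∋ x with |I| → 0 of averages of |f|. -/
noncomputable def ubar (f : ℝ → ℝ) (x : ℝ) : ℝ :=
  ⨅ h : {h : ℝ // 0 < h},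
    sSup {y | ∃ a b : ℝ, a < b ∧ a ≤ x ∧ x ≤ b ∧ b - a ≤ h.1 ∧ y = mAvg f a b}

/-- The open "interval" (a,b) in ℝ with extended-real endpoints. -/
noncomputable def erealIoo (a b : EReal) : Set ℝ := {x : ℝ | a < (x : EReal) ∧ (x : EReal) < b}

/-- Value of g at an extended-real point, understood as a limit at ±∞. -/
noncomputable def valAt (g : ℝ → ℝ) (a : EReal) : ℝ :=
  if a = ⊥ then limUnder Filter.atBot g
  else if a = ⊤ then limUnder Filter.atTop g
  else g a.toReal

/-!
Replacing `f` and `f_j` by their right-continuous representatives changes neither the maximal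
functions nor the convergence, and `|f(x+)| ≤ ubar f x`, so it suffices to integrate over the
detachment set `{|f| < uMax f}` of the representative.

* At a point of this set where `f` is continuous, only averages over intervals of length bounded
  below come close to `uMax f_j`.  They give `uMax f_j` approximate subgradients that are stable
  under uniform convergence, hence `(uMax f_j)' → (uMax f)'` almost everywhere on the set.
* The set carries the whole variation of `uMax f`: the contact set `{uMax f = |f|}` is mapped to a
  null set.  There `|f|` returns to its own level from both sides, while `|f|` factors through its
  variation function by a Lipschitz map, so Sard's argument applies.
* The total variations converge.  The local maxima of `uMax f_j` are approximated by values of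
  `|f_j|`, so `Var (uMax f_j)` is at most about the variation of `max |f_j| (uMax f - e)`, where `e`
  bounds `|f_j - f|`; as `|f| ≤ uMax f`, the latter exceeds `Var (uMax f)` by little.

Almost everywhere convergence together with convergence of the `L¹` norms is `L¹` convergence, by
Scheffé's lemma.
-/

section Variation

variable {α : Type*} [LinearOrder α]

section PseudoEMetric

variable {E F G : Type*} [PseudoEMetricSpace E] [PseudoEMetricSpace F] [PseudoEMetricSpace G]
  {f : α → E} {g : α → F} {h : α → G} {s : Set α}

theorem eVariationOn_le_add_of_edist_le
    (H : ∀ x y, edist (h x) (h y) ≤ edist (f x) (f y) + edist (g x) (g y)) :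
    eVariationOn h s ≤ eVariationOn f s + eVariationOn g s := by
  refine iSup_le fun ⟨n, p, hp, hps⟩ => ?_
  calc ∑ i ∈ Finset.range n, edist (h (p (i + 1))) (h (p i))
      ≤ ∑ i ∈ Finset.range n, edist (f (p (i + 1))) (f (p i))
        + ∑ i ∈ Finset.range n, edist (g (p (i + 1))) (g (p i)) := by
        rw [← Finset.sum_add_distrib]
        exact Finset.sum_le_sum fun i _ => H _ _
    _ ≤ eVariationOn f s + eVariationOn g s :=
        add_le_add (eVariationOn.sum_le hp hps) (eVariationOn.sum_le hp hps)

theorem eVariationOn_insert_of_isGreatest {a m : α} (hm : IsGreatest s m) (hma : m ≤ a) :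
    eVariationOn f (insert a s) = eVariationOn f s + edist (f m) (f a) := by
  rw [← union_singleton, eVariationOn.union' f hm isLeast_singleton hma,
    eVariationOn.subsingleton f subsingleton_singleton, add_zero]

theorem eVariationOn_eq_iSup_finset (f : α → E) (s : Set α) :
    eVariationOn f s = ⨆ K : {K : Finset α // (K : Set α) ⊆ s}, eVariationOn f K := by
  classical
  refine le_antisymm (iSup_le fun ⟨n, p, hp, hps⟩ => ?_) (iSup_le fun K => eVariationOn.mono f K.2)
  refine le_iSup_of_le ⟨(Finset.Iic n).image p, by simpa [subset_def] using fun i _ => hps i⟩ ?_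
  exact eVariationOn.sum_le_of_monotoneOn_Iic (hp.monotoneOn _) fun i hi => by
    simpa using ⟨i, hi, rfl⟩

theorem eVariationOn_finset_add_le (K : Finset α)
    (H : ∀ x y, edist (f x) (f y) + edist (g x) (g y) ≤ edist (h x) (h y)) :
    eVariationOn f K + eVariationOn g K ≤ eVariationOn h K := by
  classical
  induction K using Finset.induction_on_max with
  | empty => simp
  | insert a K hK ih =>
    rcases K.eq_empty_or_nonempty with rfl | hne
    · simp
    have hm : IsGreatest (K : Set α) (K.max' hne) := K.isGreatest_max' hne
    have hma : K.max' hne ≤ a := (hK _ hm.1).le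
    simp only [Finset.coe_insert, eVariationOn_insert_of_isGreatest hm hma]
    rw [add_add_add_comm]
    exact add_le_add ih (H _ _)

theorem eVariationOn_add_le_of_edist_le
    (H : ∀ x y, edist (f x) (f y) + edist (g x) (g y) ≤ edist (h x) (h y)) :
    eVariationOn f s + eVariationOn g s ≤ eVariationOn h s := by
  classical
  rw [eVariationOn_eq_iSup_finset f, eVariationOn_eq_iSup_finset g]
  have : Nonempty {K : Finset α // (K : Set α) ⊆ s} := ⟨⟨∅, by simp⟩⟩
  rw [ENNReal.iSup_add_iSup fun K L => ?_]
  · exact iSup_le fun K =>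
      (eVariationOn_finset_add_le K.1 H).trans (eVariationOn.mono h K.2)
  · refine ⟨⟨K.1 ∪ L.1, by simpa using ⟨K.2, L.2⟩⟩, ?_⟩
    gcongr <;> refine eVariationOn.mono _ ?_ <;> simp

end PseudoEMetric

section Real

variable {h u w V : α → ℝ} {s : Set α} {d : ℝ}

theorem eVariationOn_add_le (f g : α → ℝ) (s : Set α) :
    eVariationOn (f + g) s ≤ eVariationOn f s + eVariationOn g s :=
  eVariationOn_le_add_of_edist_le fun _ _ => edist_add_add_le _ _ _ _

theorem eVariationOn_neg (f : α → ℝ) (s : Set α) : eVariationOn (-f) s = eVariationOn f s := by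
  simp only [eVariationOn, Pi.neg_apply, edist_neg_neg]

theorem eVariationOn_sub_le (f g : α → ℝ) (s : Set α) :
    eVariationOn (f - g) s ≤ eVariationOn f s + eVariationOn g s :=
  sub_eq_add_neg f g ▸ eVariationOn_neg g s ▸ eVariationOn_add_le f (-g) s

theorem eVariationOn_max_le (f g : α → ℝ) (s : Set α) :
    eVariationOn (fun x => max (f x) (g x)) s ≤ eVariationOn f s + eVariationOn g s :=
  eVariationOn_le_add_of_edist_le fun x y => by
    simp only [edist_dist, Real.dist_eq]
    rw [← ENNReal.ofReal_add (abs_nonneg _) (abs_nonneg _)]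
    exact ENNReal.ofReal_le_ofReal
      ((abs_max_sub_max_le_max _ _ _ _).trans (max_le_add_of_nonneg (abs_nonneg _) (abs_nonneg _)))

theorem edist_min_add_edist_sub_min (a b η : ℝ) :
    edist (min a η) (min b η) + edist (a - min a η) (b - min b η) = edist a b := by
  simp only [edist_dist, Real.dist_eq]
  rw [← ENNReal.ofReal_add (abs_nonneg _) (abs_nonneg _)]
  congr 1
  grind

theorem tendsto_eVariationOn_min_zero (hh : BoundedVariationOn h s) (h0 : ∀ x ∈ s, 0 ≤ h x) :
    Tendsto (fun η => eVariationOn (fun x => min (h x) η) s) (𝓝 0) (𝓝 0) := by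
  have hsplit : ∀ η, eVariationOn (fun x => min (h x) η) s
      + eVariationOn (fun x => h x - min (h x) η) s ≤ eVariationOn h s := fun η =>
    eVariationOn_add_le_of_edist_le fun x y => (edist_min_add_edist_sub_min (h x) (h y) η).le
  refine ENNReal.tendsto_nhds_zero.2 fun ε hε => ?_
  rcases eq_or_ne (eVariationOn h s) 0 with hz | hz
  · exact Eventually.of_forall fun η =>
      (le_self_add.trans (hsplit η)).trans (hz.trans_le zero_le)
  have hlim : ∀ x ∈ s, Tendsto (fun η => h x - min (h x) η) (𝓝 0) (𝓝 (h x)) := fun x hx => by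
    have : ContinuousAt (fun η => h x - min (h x) η) 0 := by fun_prop
    simpa [ContinuousAt, h0 x hx] using this
  filter_upwards [eVariationOn.lowerSemicontinuous_aux hlim (ENNReal.sub_lt_self hh hz hε.ne')]
    with η hη
  have hfin : eVariationOn (fun x => h x - min (h x) η) s ≠ ⊤ :=
    ne_top_of_le_ne_top hh (le_add_self.trans (hsplit η))
  refine (ENNReal.add_le_add_iff_right hfin).1 ((hsplit η).trans ?_)
  rw [add_comm]
  exact tsub_le_iff_right.1 hη.le

/-- Near every local maximum of `u`, with two strictly lower points on either side, the function
`w` comes arbitrarily close to the maximal value.  This is the form in which the maximal function is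
controlled by the function itself. -/
def PeaksApproximatedBy (u w : α → ℝ) : Prop :=
  ∀ ⦃x y z⦄, x < y → y < z → u x < u y → u z < u y → ∀ c < u y, ∃ q ∈ Ioo x z, c < w q

theorem PeaksApproximatedBy.mono {v : α → ℝ} (h : PeaksApproximatedBy u v) (hvw : ∀ x, v x ≤ w x) :
    PeaksApproximatedBy u w := fun _ _ _ hxy hyz hx hz c hc =>
  let ⟨q, hq, hcq⟩ := h hxy hyz hx hz c hc
  ⟨q, hq, hcq.trans_le (hvw q)⟩

theorem PeaksApproximatedBy.two_mul_le (hpeak : PeaksApproximatedBy u w)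
    (hV : ∀ x y, x ≤ y → |w y - w x| ≤ V y - V x) {x y z : α} (hxy : x ≤ y) (hyz : y ≤ z)
    (hx : u x < u y) (hz : u z < u y) : 2 * u y ≤ V z - V x + w x + w z := by
  have hxy' : x < y := hxy.lt_of_ne (by rintro rfl; exact hx.false)
  have hyz' : y < z := hyz.lt_of_ne (by rintro rfl; exact hz.false)
  suffices u y ≤ (V z - V x + w x + w z) / 2 by linarith
  refine le_of_forall_lt fun c hc => ?_
  obtain ⟨q, hq, hcq⟩ := hpeak hxy' hyz' hx hz c hc
  have hxq := abs_le.1 (hV x q hq.1.le)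
  have hqz := abs_le.1 (hV q z hq.2.le)
  linarith

theorem PeaksApproximatedBy.sum_abs_sub_le (hpeak : PeaksApproximatedBy u w)
    (hV : ∀ x y, x ≤ y → |w y - w x| ≤ V y - V x) (hwu : ∀ x, w x ≤ u x) {p : ℕ → α}
    (hp : Monotone p) (n : ℕ) {y : α} (hy : p n ≤ y) :
    (∑ i ∈ Finset.range n, |u (p (i + 1)) - u (p i)|) + |u y - u (p n)| ≤
      (u (p 0) - w (p 0)) + (V y - V (p 0)) + (u y - w y) := by
  induction n generalizing y with
  | zero =>
    have := abs_le.1 (hV _ _ hy)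
    simp only [Finset.range_zero, Finset.sum_empty, zero_add]
    refine abs_le.2 ⟨?_, ?_⟩ <;> linarith [hwu y, hwu (p 0)]
  | succ n ih =>
    rw [Finset.sum_range_succ]
    have hn : p n ≤ p (n + 1) := hp n.le_succ
    have hVy := abs_le.1 (hV _ _ hy)
    have ih_y := ih (hn.trans hy)
    have ih_succ := ih hn
    rcases le_or_gt (u (p (n + 1))) (u y) with hup | hdown
    · rw [abs_of_nonneg (sub_nonneg.2 hup)]
      linarith
    rw [abs_of_neg (sub_neg.2 hdown)]
    rcases le_or_gt (u (p (n + 1))) (u (p n)) with hdown' | hup'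
    · rw [abs_of_nonpos (sub_nonpos.2 hdown')]
      rw [abs_of_nonpos (sub_nonpos.2 (hdown.le.trans hdown'))] at ih_y
      linarith
    · rw [abs_of_pos (sub_pos.2 hup')]
      have ih_n := ih le_rfl
      rw [sub_self, abs_zero] at ih_n
      linarith [hpeak.two_mul_le hV hn hy hup' hdown, hwu y]

theorem PeaksApproximatedBy.eVariationOn_le (hpeak : PeaksApproximatedBy u w)
    (hw : BoundedVariationOn w univ) (hwu : ∀ x, w x ≤ u x) (hd : ∀ x, u x ≤ w x + d) :
    eVariationOn u univ ≤ eVariationOn w univ + ENNReal.ofReal (2 * d) := by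
  refine iSup_le fun ⟨n, p, hp, _⟩ => ?_
  have hwl := hw.locallyBoundedVariationOn
  have hsum := hpeak.sum_abs_sub_le (V := variationOnFromTo w univ (p 0))
    (fun x y hxy => variationOnFromTo.abs_sub_le_sub_of_le hwl (mem_univ _) (mem_univ _)
      (mem_univ _) hxy) hwu hp n le_rfl
  have hV : variationOnFromTo w univ (p 0) (p n) ≤ (eVariationOn w univ).toReal := by
    rw [variationOnFromTo.eq_of_le _ _ (hp n.zero_le)]
    exact ENNReal.toReal_mono hw (eVariationOn.mono _ (subset_univ _))
  rw [sub_self, abs_zero, add_zero, variationOnFromTo.self, sub_zero] at hsum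
  calc ∑ i ∈ Finset.range n, edist (u (p (i + 1))) (u (p i))
      = ENNReal.ofReal (∑ i ∈ Finset.range n, |u (p (i + 1)) - u (p i)|) := by
        rw [ENNReal.ofReal_sum_of_nonneg fun _ _ => abs_nonneg _]
        simp only [edist_dist, Real.dist_eq]
    _ ≤ ENNReal.ofReal ((eVariationOn w univ).toReal + 2 * d) :=
        ENNReal.ofReal_le_ofReal (by linarith [hd (p 0), hd (p n)])
    _ ≤ eVariationOn w univ + ENNReal.ofReal (2 * d) := by
        refine ENNReal.ofReal_add_le.trans_eq ?_
        rw [ENNReal.ofReal_toReal hw]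

end Real

end Variation

section Derivative

variable {h u W : ℝ → ℝ} {s : Set ℝ}

theorem eVariationOn_univ_le_measure_univ {E : Type*} [PseudoEMetricSpace E] {f : ℝ → E}
    {μ : Measure ℝ} (H : ∀ x y, x ≤ y → edist (f x) (f y) ≤ μ (Ioc x y)) :
    eVariationOn f univ ≤ μ univ := by
  refine iSup_le fun ⟨n, p, hp, _⟩ => ?_
  calc ∑ i ∈ Finset.range n, edist (f (p (i + 1))) (f (p i))
      ≤ ∑ i ∈ Finset.range n, μ (Ioc (p i) (p (i + 1))) :=
        Finset.sum_le_sum fun i _ => edist_comm (f (p i)) _ ▸ H _ _ (hp i.le_succ)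
    _ ≤ μ univ :=
        sum_measure_le_measure_univ (fun i _ => measurableSet_Ioc.nullMeasurableSet)
          fun i _ j _ hij => (hp.pairwise_disjoint_on_Ioc_succ hij).aedisjoint

theorem volume_image_le_lintegral_enorm_deriv (hs : MeasurableSet s)
    (hd : ∀ x ∈ s, DifferentiableAt ℝ h x) : volume (h '' s) ≤ ∫⁻ x in s, ‖deriv h x‖ₑ := by
  have := addHaar_image_le_lintegral_abs_det_fderiv volume hs
    fun x hx => (hd x hx).hasDerivAt.hasFDerivAt.hasFDerivWithinAt (s := s)
  simpa [Real.enorm_eq_ofReal_abs] using this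

theorem edist_le_volume_image_Ioc (hh : Continuous h) {x y : ℝ} (hxy : x ≤ y) :
    edist (h x) (h y) ≤ volume (h '' Ioc x y) := by
  have hsub : uIcc (h x) (h y) ⊆ h '' Icc x y :=
    uIcc_of_le hxy ▸ intermediate_value_uIcc hh.continuousOn
  rw [← Ioc_insert_left hxy, image_insert_eq] at hsub
  calc edist (h x) (h y) = volume (uIcc (h x) (h y)) := by
        rw [Real.volume_interval, edist_comm, edist_dist, Real.dist_eq]
    _ ≤ volume (insert (h x) (h '' Ioc x y)) := measure_mono hsub
    _ = volume (h '' Ioc x y) := measure_congr (insert_ae_eq_self _ _)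

theorem eVariationOn_univ_le_lintegral_enorm_deriv (hh : Continuous h) (hs : MeasurableSet s)
    (hd : ∀ x ∈ s, DifferentiableAt ℝ h x) (hnull : volume (h '' sᶜ) = 0) :
    eVariationOn h univ ≤ ∫⁻ x in s, ‖deriv h x‖ₑ := by
  have hinc : ∀ x y, x ≤ y → edist (h x) (h y) ≤
      (volume.restrict s).withDensity (fun t => ‖deriv h t‖ₑ) (Ioc x y) := fun x y hxy => by
    rw [withDensity_apply _ measurableSet_Ioc, Measure.restrict_restrict measurableSet_Ioc]
    calc edist (h x) (h y) ≤ volume (h '' Ioc x y) := edist_le_volume_image_Ioc hh hxy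
      _ ≤ volume (h '' (Ioc x y ∩ s) ∪ h '' sᶜ) := by
          rw [← image_union]
          refine measure_mono (image_mono fun t ht => ?_)
          by_cases hts : t ∈ s
          exacts [Or.inl ⟨ht, hts⟩, Or.inr hts]
      _ ≤ volume (h '' (Ioc x y ∩ s)) := by
          simpa only [hnull, add_zero] using
            measure_union_le (μ := volume) (h '' (Ioc x y ∩ s)) (h '' sᶜ)
      _ ≤ ∫⁻ t in Ioc x y ∩ s, ‖deriv h t‖ₑ :=
          volume_image_le_lintegral_enorm_deriv (measurableSet_Ioc.inter hs) fun t ht => hd t ht.2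
  refine (eVariationOn_univ_le_measure_univ hinc).trans_eq ?_
  rw [withDensity_apply _ MeasurableSet.univ, Measure.restrict_univ]

theorem abs_deriv_le_deriv_of_abs_sub_le (H : ∀ x y, x ≤ y → |u y - u x| ≤ W y - W x) {x : ℝ}
    (hu : DifferentiableAt ℝ u x) (hW : DifferentiableAt ℝ W x) : |deriv u x| ≤ deriv W x := by
  have hsub : Monotone (W - u) := fun y z hyz => by
    simp only [Pi.sub_apply]
    linarith [H y z hyz, le_abs_self (u z - u y)]
  have hadd : Monotone (W + u) := fun y z hyz => by
    simp only [Pi.add_apply]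
    linarith [H y z hyz, neg_abs_le (u z - u y)]
  have hsub' := deriv_sub hW hu ▸ hsub.deriv_nonneg (x := x)
  have hadd' := deriv_add hW hu ▸ hadd.deriv_nonneg (x := x)
  exact abs_le.2 ⟨by linarith, by linarith⟩

theorem setLIntegral_deriv_le_of_monotone (hW : Monotone W) {a b : ℝ} (hab : a ≤ b) :
    ∫⁻ x in Ioc a b, ENNReal.ofReal (deriv W x) ≤ ENNReal.ofReal (W b - W a) := by
  have hint := (hW.monotoneOn (uIcc a b)).intervalIntegrable_deriv
  have hle := (hW.monotoneOn (uIcc a b)).intervalIntegral_deriv_mem_uIcc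
  rw [uIcc_of_le (sub_nonneg.2 (hW hab)), intervalIntegral.integral_of_le hab] at hle
  rw [intervalIntegrable_iff_integrableOn_Ioc_of_le hab] at hint
  rw [← ofReal_integral_eq_lintegral_ofReal hint (ae_of_all _ fun x => hW.deriv_nonneg)]
  exact ENNReal.ofReal_le_ofReal hle.2

theorem lintegral_enorm_deriv_le_eVariationOn (hu : BoundedVariationOn u univ) :
    ∫⁻ x, ‖deriv u x‖ₑ ≤ eVariationOn u univ := by
  have hul := hu.locallyBoundedVariationOn
  set V : ℝ → ℝ := variationOnFromTo u univ 0 with hV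
  have hVmono : Monotone V := monotoneOn_univ.1 (variationOnFromTo.monotoneOn hul (mem_univ _))
  have hVinc : ∀ a b, a ≤ b → ENNReal.ofReal (V b - V a) ≤ eVariationOn u univ := fun a b hab => by
    rw [hV, ← variationOnFromTo.add hul (mem_univ 0) (mem_univ a) (mem_univ b), add_sub_cancel_left,
      variationOnFromTo.eq_of_le _ _ hab]
    exact ENNReal.ofReal_toReal_le.trans (eVariationOn.mono _ (subset_univ _))
  have hle : ∀ᵐ x, ‖deriv u x‖ₑ ≤ ENNReal.ofReal (deriv V x) := by
    filter_upwards [hul.ae_differentiableAt, hVmono.ae_differentiableAt] with x hux hVx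
    rw [Real.enorm_eq_ofReal_abs]
    exact ENNReal.ofReal_le_ofReal (abs_deriv_le_deriv_of_abs_sub_le (fun x y hxy =>
      variationOnFromTo.abs_sub_le_sub_of_le hul (mem_univ _) (mem_univ _) (mem_univ _) hxy)
      hux hVx)
  have hcov : AECover volume atTop (fun n : ℕ => Ioc (-(n : ℝ)) n) :=
    aecover_Ioc (tendsto_neg_atTop_atBot.comp tendsto_natCast_atTop_atTop)
      tendsto_natCast_atTop_atTop
  refine le_of_tendsto' (hcov.lintegral_tendsto_of_nat (measurable_deriv u).enorm.aemeasurable)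
    fun n => ?_
  have hn : -(n : ℝ) ≤ n := neg_le_self n.cast_nonneg
  exact ((lintegral_mono_ae (ae_restrict_of_ae hle)).trans
    (setLIntegral_deriv_le_of_monotone hVmono hn)).trans (hVinc _ _ hn)

theorem integrable_deriv_of_boundedVariationOn (hu : BoundedVariationOn u univ) :
    Integrable (deriv u) :=
  ⟨(measurable_deriv u).aestronglyMeasurable,
    (lintegral_enorm_deriv_le_eVariationOn hu).trans_lt hu.lt_top⟩

theorem setIntegral_abs_deriv_eq_toReal_lintegral (u : ℝ → ℝ) (s : Set ℝ) :
    ∫ x in s, |deriv u x| = (∫⁻ x in s, ‖deriv u x‖ₑ).toReal :=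
  integral_norm_eq_lintegral_enorm (measurable_deriv u).aestronglyMeasurable

theorem setIntegral_abs_deriv_le_varOn (hu : BoundedVariationOn u univ) (s : Set ℝ) :
    ∫ x in s, |deriv u x| ≤ varOn u univ := by
  rw [setIntegral_abs_deriv_eq_toReal_lintegral]
  exact ENNReal.toReal_mono hu
    ((setLIntegral_le_lintegral s _).trans (lintegral_enorm_deriv_le_eVariationOn hu))

end Derivative

theorem tendsto_integral_norm_sub_of_integral_norm_le {α E ι : Type*} [MeasurableSpace α]
    [NormedAddCommGroup E] {μ : Measure α} {l : Filter ι} [l.IsCountablyGenerated]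
    {v : ι → α → E} {u : α → E} {m : ι → ℝ} (hv : ∀ i, Integrable (v i) μ) (hu : Integrable u μ)
    (hlim : ∀ᵐ x ∂μ, Tendsto (fun i => v i x) l (𝓝 (u x)))
    (hvm : ∀ i, ∫ x, ‖v i x‖ ∂μ ≤ m i) (hm : Tendsto m l (𝓝 (∫ x, ‖u x‖ ∂μ))) :
    Tendsto (fun i => ∫ x, ‖v i x - u x‖ ∂μ) l (𝓝 0) := by
  -- The excess `‖v i - u‖ - ‖v i‖ + ‖u‖` lies between `0` and `2‖u‖`.
  have hexc : Tendsto (fun i => ∫ x, (‖v i x - u x‖ - ‖v i x‖ + ‖u x‖) ∂μ) l (𝓝 (∫ _, 0 ∂μ)) := by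
    refine tendsto_integral_filter_of_dominated_convergence (fun x => 2 * ‖u x‖)
      (Eventually.of_forall fun i =>
        ((((hv i).sub hu).norm.sub (hv i).norm).add hu.norm).aestronglyMeasurable)
      (Eventually.of_forall fun i => ae_of_all _ fun x => ?_) (hu.norm.const_mul 2) ?_
    · rw [Real.norm_eq_abs, abs_le]
      constructor <;>
        linarith [norm_sub_le (v i x) (u x), norm_sub_norm_le (v i x) (u x), norm_nonneg (u x)]
    · filter_upwards [hlim] with x hx
      simpa using ((hx.sub_const (u x)).norm.sub hx.norm).add_const ‖u x‖
  have hsplit : ∀ i, ∫ x, ‖v i x - u x‖ ∂μ ≤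
      (∫ x, (‖v i x - u x‖ - ‖v i x‖ + ‖u x‖) ∂μ) + (m i - ∫ x, ‖u x‖ ∂μ) := fun i => by
    have hsub := ((hv i).sub hu).norm
    have := integral_add (hsub.sub (hv i).norm) hu.norm
    have := integral_sub hsub (hv i).norm
    simp only [Pi.sub_apply] at *
    linarith [hvm i]
  refine squeeze_zero (fun i => integral_nonneg fun x => norm_nonneg _) hsplit ?_
  simpa using hexc.add (hm.sub_const (∫ x, ‖u x‖ ∂μ))

section MaximalFunction

variable {f g : ℝ → ℝ} {a b c e x y B ρ : ℝ}

theorem mAvg_nonneg (f : ℝ → ℝ) (hab : a ≤ b) : 0 ≤ mAvg f a b :=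
  div_nonneg (intervalIntegral.integral_nonneg hab fun _ _ => abs_nonneg _) (sub_nonneg.2 hab)

theorem mAvg_mul_sub (f : ℝ → ℝ) (a b : ℝ) : mAvg f a b * (b - a) = ∫ t in a..b, |f t| := by
  rcases eq_or_ne a b with rfl | hab
  · simp
  · exact div_mul_cancel₀ _ (sub_ne_zero.2 hab.symm)

theorem mAvg_le_of_forall_abs_le (hab : a < b) (h : ∀ t ∈ Ioc a b, |f t| ≤ c) : mAvg f a b ≤ c := by
  rw [mAvg, div_le_iff₀ (sub_pos.2 hab)]
  have := intervalIntegral.norm_integral_le_of_norm_le_const (f := fun t => |f t|) (a := a) (b := b)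
    (C := c) (by simpa [uIoc_of_le hab.le] using h)
  rw [abs_of_pos (sub_pos.2 hab)] at this
  exact (le_abs_self _).trans this

theorem exists_lt_abs_of_lt_mAvg (hab : a < b) (h : c < mAvg f a b) : ∃ t ∈ Ioc a b, c < |f t| := by
  by_contra! H
  exact h.not_ge (mAvg_le_of_forall_abs_le hab H)

theorem exists_abs_le_mAvg (hf : IntervalIntegrable f volume a b) (hab : a < b) :
    ∃ t ∈ Ioc a b, |f t| ≤ mAvg f a b := by
  have hint := (intervalIntegrable_iff_integrableOn_Ioc_of_le hab.le).1 hf.abs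
  obtain ⟨t, ht, hle⟩ := exists_le_setAverage (by simp [hab]) (by simp) hint
  rw [← uIoc_of_le hab.le, interval_average_eq_div] at hle
  exact ⟨t, ht, hle⟩

theorem mAvg_le_uMax (hB : ∀ t, |f t| ≤ B) (hab : a < b) (hax : a ≤ x) (hxb : x ≤ b) :
    mAvg f a b ≤ uMax f x := by
  refine le_csSup ⟨B, ?_⟩ ⟨a, b, hab, hax, hxb, rfl⟩
  rintro _ ⟨a', b', hab', -, -, rfl⟩
  exact mAvg_le_of_forall_abs_le hab' fun t _ => hB t

theorem uMax_le_of_forall_mAvg_le (h : ∀ a b, a < b → a ≤ x → x ≤ b → mAvg f a b ≤ c) :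
    uMax f x ≤ c := by
  refine csSup_le ⟨_, x, x + 1, by linarith, le_rfl, by linarith, rfl⟩ ?_
  rintro _ ⟨a, b, hab, hax, hxb, rfl⟩
  exact h a b hab hax hxb

theorem exists_lt_mAvg_of_lt_uMax (h : c < uMax f x) :
    ∃ a b, a < b ∧ a ≤ x ∧ x ≤ b ∧ c < mAvg f a b := by
  by_contra! H
  exact h.not_ge (uMax_le_of_forall_mAvg_le H)

theorem uMax_nonneg (f : ℝ → ℝ) (x : ℝ) : 0 ≤ uMax f x := by
  refine Real.sSup_nonneg ?_
  rintro _ ⟨a, b, hab, -, -, rfl⟩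
  exact mAvg_nonneg f hab.le

theorem uMax_le_of_forall_abs_le (hB : ∀ t, |f t| ≤ B) (x : ℝ) : uMax f x ≤ B :=
  uMax_le_of_forall_mAvg_le fun _ _ hab _ _ => mAvg_le_of_forall_abs_le hab fun t _ => hB t

theorem mAvg_le_mAvg_add (hf : IntervalIntegrable f volume a b)
    (hg : IntervalIntegrable g volume a b) (hab : a < b) (h : ∀ t, |g t - f t| ≤ e) :
    mAvg g a b ≤ mAvg f a b + e := by
  rw [mAvg, mAvg, div_add' _ _ _ (sub_pos.2 hab).ne']
  refine div_le_div_of_nonneg_right ?_ (sub_nonneg.2 hab.le)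
  calc ∫ t in a..b, |g t| ≤ ∫ t in a..b, (|f t| + e) :=
        intervalIntegral.integral_mono_on hab.le hg.abs (hf.abs.add intervalIntegrable_const)
          fun t _ => by linarith [h t, abs_sub_abs_le_abs_sub (g t) (f t)]
    _ = (∫ t in a..b, |f t|) + e * (b - a) := by
        rw [intervalIntegral.integral_add hf.abs intervalIntegrable_const,
          intervalIntegral.integral_const, smul_eq_mul, mul_comm]

theorem uMax_le_uMax_add (hB : ∀ t, |f t| ≤ B) (hf : ∀ a b, IntervalIntegrable f volume a b)
    (hg : ∀ a b, IntervalIntegrable g volume a b) (h : ∀ t, |g t - f t| ≤ e) (x : ℝ) :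
    uMax g x ≤ uMax f x + e :=
  uMax_le_of_forall_mAvg_le fun a b hab hax hxb =>
    (mAvg_le_mAvg_add (hf a b) (hg a b) hab h).trans
      (by linarith [mAvg_le_uMax hB hab hax hxb])

theorem mAvg_congr_ae (h : f =ᵐ[volume] g) : mAvg f = mAvg g := by
  ext a b
  rw [mAvg, mAvg, intervalIntegral.integral_congr_ae (g := fun t => |g t|)]
  filter_upwards [h] with t ht _
  rw [ht]

theorem uMax_congr_ae (h : f =ᵐ[volume] g) : uMax f = uMax g := by
  ext x
  rw [uMax, uMax, mAvg_congr_ae h]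

theorem mAvg_comp_neg (f : ℝ → ℝ) (a b : ℝ) : mAvg (fun t => f (-t)) a b = mAvg f (-b) (-a) := by
  rw [mAvg, mAvg, intervalIntegral.integral_comp_neg (fun t => |f t|), neg_sub_neg]

theorem uMax_comp_neg (f : ℝ → ℝ) (x : ℝ) : uMax (fun t => f (-t)) x = uMax f (-x) := by
  rw [uMax, uMax]
  congr 1
  ext y
  simp only [mAvg_comp_neg]
  constructor <;> rintro ⟨a, b, hab, hax, hxb, rfl⟩ <;>
    exact ⟨-b, -a, neg_lt_neg hab, by linarith, by linarith, by simp⟩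

theorem peaksApproximatedBy_uMax (hB : ∀ t, |f t| ≤ B) :
    PeaksApproximatedBy (uMax f) fun t => |f t| := by
  intro x y z _ _ hx hz c hc
  obtain ⟨a, b, hab, hay, hyb, hm⟩ := exists_lt_mAvg_of_lt_uMax (max_lt (max_lt hx hz) hc)
  simp only [max_lt_iff] at hm
  have hxa : x < a := not_le.1 fun hax =>
    (mAvg_le_uMax hB hab hax (by linarith)).not_gt hm.1.1
  have hbz : b < z := not_le.1 fun hzb =>
    (mAvg_le_uMax hB hab (by linarith) hzb).not_gt hm.1.2
  obtain ⟨q, hq, hcq⟩ := exists_lt_abs_of_lt_mAvg hab hm.2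
  exact ⟨q, ⟨hxa.trans hq.1, hq.2.trans_lt hbz⟩, hcq⟩

theorem integral_abs_le_uMax_mul (hB : ∀ t, |f t| ≤ B)
    (hf : ∀ a b, IntervalIntegrable f volume a b) (hab : a < b) (hay : a ≤ y) (hyb : y ≤ b) :
    ∫ t in a..b, |f t| ≤ uMax f x * (b - a + |y - x|) := by
  have hhull : min a x < max b x := (min_le_left _ _).trans_lt (hab.trans_le (le_max_left _ _))
  calc ∫ t in a..b, |f t| ≤ ∫ t in (min a x)..(max b x), |f t| :=
        intervalIntegral.integral_mono_interval (min_le_left _ _) hab.le (le_max_left _ _)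
          (ae_of_all _ fun t => abs_nonneg _) (hf _ _).abs
    _ = mAvg f (min a x) (max b x) * (max b x - min a x) :=
        (mAvg_mul_sub f _ _).symm
    _ ≤ uMax f x * (b - a + |y - x|) :=
        mul_le_mul (mAvg_le_uMax hB hhull (min_le_right _ _) (le_max_right _ _)) (by grind)
          (sub_nonneg.2 hhull.le) (uMax_nonneg f x)

theorem uMax_le_max_of_forall_abs_le (hB : ∀ t, |f t| ≤ B)
    (hf : ∀ a b, IntervalIntegrable f volume a b) (hρ : 0 < ρ)
    (hc : ∀ t, |t - y| ≤ ρ → |f t| ≤ c) (x : ℝ) :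
    uMax f y ≤ max c (uMax f x * (1 + |y - x| / ρ)) := by
  refine uMax_le_of_forall_mAvg_le fun a b hab hay hyb => ?_
  rcases le_or_gt (b - a) ρ with hshort | hlong
  · exact le_max_of_le_left (mAvg_le_of_forall_abs_le hab fun t ht => hc t
      (abs_le.2 ⟨by linarith [ht.1], by linarith [ht.2]⟩))
  · have hba : 0 < b - a := sub_pos.2 hab
    refine le_max_of_le_right ?_
    calc mAvg f a b ≤ uMax f x * (b - a + |y - x|) / (b - a) :=
          div_le_div_of_nonneg_right (integral_abs_le_uMax_mul hB hf hab hay hyb) hba.le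
      _ = uMax f x * (1 + |y - x| / (b - a)) := by field_simp
      _ ≤ uMax f x * (1 + |y - x| / ρ) := by
          gcongr
          exact uMax_nonneg f x

theorem lowerSemicontinuous_uMax (hB : ∀ t, |f t| ≤ B)
    (hf : ∀ a b, IntervalIntegrable f volume a b) : LowerSemicontinuous (uMax f) := by
  intro x c hc
  obtain ⟨a, b, hab, hax, hxb, hm⟩ := exists_lt_mAvg_of_lt_uMax hc
  have hlen : ∀ y, 0 < b - a + |x - y| := fun y =>
    add_pos_of_pos_of_nonneg (sub_pos.2 hab) (abs_nonneg _)
  have hcont : Continuous fun y => (∫ t in a..b, |f t|) / (b - a + |x - y|) :=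
    continuous_const.div (by fun_prop) fun y => (hlen y).ne'
  have hlim : c < (∫ t in a..b, |f t|) / (b - a + |x - x|) := by simpa [mAvg] using hm
  filter_upwards [hcont.continuousAt.eventually_const_lt hlim] with y hy
  exact hy.trans_le ((div_le_iff₀ (hlen y)).2 (integral_abs_le_uMax_mul hB hf hab hax hxb))

theorem continuous_uMax (hB : ∀ t, |f t| ≤ B) (hf : ∀ a b, IntervalIntegrable f volume a b)
    (hreg : ∀ x, ∀ c > uMax f x, ∀ᶠ t in 𝓝 x, |f t| ≤ c) : Continuous (uMax f) := by
  refine continuous_iff_lower_upperSemicontinuous.2 ⟨lowerSemicontinuous_uMax hB hf, ?_⟩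
  intro x c hc
  obtain ⟨c', hxc', hc'⟩ := exists_between hc
  obtain ⟨ρ, hρ, hball⟩ := Metric.eventually_nhds_iff.1 (hreg x c' hxc')
  have hcont : Continuous fun y => max c' (uMax f x * (1 + |y - x| / (ρ / 3))) := by fun_prop
  have hlim : max c' (uMax f x * (1 + |x - x| / (ρ / 3))) < c := by simpa using ⟨hc', hc⟩
  filter_upwards [hcont.continuousAt.eventually_lt_const hlim,
    Metric.ball_mem_nhds x (by positivity : 0 < ρ / 3)] with y hy hyx
  rw [mem_ball_iff_norm, Real.norm_eq_abs] at hyx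
  have hρ3 : 0 < ρ / 3 := by positivity
  refine (uMax_le_max_of_forall_abs_le hB hf hρ3 (fun t ht => hball ?_) x).trans_lt hy
  rw [Real.dist_eq]
  linarith [abs_sub_le t y x]

theorem exists_lipschitzOnWith_uMax (hB : ∀ t, |f t| ≤ B)
    (hf : ∀ a b, IntervalIntegrable f volume a b) (hcont : ContinuousAt f x)
    (hx : |f x| < uMax f x) : ∃ K, ∃ t ∈ 𝓝 x, LipschitzOnWith K (uMax f) t := by
  obtain ⟨c, hfc, hcu⟩ := exists_between hx
  obtain ⟨ρ, hρ, hball⟩ := Metric.eventually_nhds_iff.1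
    ((hcont.abs.eventually_lt_const hfc).and (lowerSemicontinuous_uMax hB hf x c hcu))
  have hnear : ∀ y ∈ Metric.ball x (ρ / 2), ∀ t, |t - y| ≤ ρ / 3 → |f t| ≤ c := fun y hy t ht => by
    refine (hball ?_).1.le
    rw [mem_ball_iff_norm, Real.norm_eq_abs] at hy
    rw [Real.dist_eq]
    linarith [abs_sub_le t y x]
  refine ⟨Real.toNNReal (B / (ρ / 3)), _, Metric.ball_mem_nhds x (half_pos hρ),
    LipschitzOnWith.of_le_add_mul' _ fun y hy z _ => ?_⟩
  have hcy : c < uMax f y := (hball (Metric.ball_subset_ball (half_le_self hρ.le) hy)).2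
  have hyz := (le_max_iff.1 (uMax_le_max_of_forall_abs_le hB hf (by positivity) (hnear y hy) z))
    |>.resolve_left hcy.not_ge
  calc uMax f y ≤ uMax f z * (1 + |y - z| / (ρ / 3)) := hyz
    _ = uMax f z + uMax f z / (ρ / 3) * dist y z := by rw [Real.dist_eq]; ring
    _ ≤ uMax f z + B / (ρ / 3) * dist y z := by
        gcongr
        exact uMax_le_of_forall_abs_le hB z

end MaximalFunction

section DerivativeConvergence

variable {u v : ℝ → ℝ} {v' c d p q s x δ ε η : ℝ}

/-- Existence of approximate subgradients of `v` at `x`: an affine function of slope `p`, lowered by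
the cone `ε * |t|`, supports `v` from below on the `δ`-neighbourhood of `x`.  The support line only
passes through values `c < v x` so that suprema that are not attained qualify. -/
def AlmostSubdifferentiableAt (v : ℝ → ℝ) (x ε δ : ℝ) : Prop :=
  ∀ c < v x, ∃ p, ∀ t, |t| ≤ δ → c + p * t - ε * |t| ≤ v (x + t)

theorem abs_sub_le_of_affine_le (hs : 0 < s)
    (h : ∀ t, |t| ≤ s → c + p * t ≤ d + q * t + η * |t|) : |p - q| ≤ η + (d - c) / s := by
  have hright := h s (abs_of_pos hs).le
  have hleft := h (-s) (by rw [abs_neg, abs_of_pos hs])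
  rw [abs_neg] at hleft
  rw [abs_of_pos hs] at hright hleft
  rw [← sub_le_iff_le_add', le_div_iff₀ hs]
  rcases abs_cases (p - q) with ⟨h', -⟩ | ⟨h', -⟩ <;> rw [h'] <;> linarith

theorem eventually_le_add_of_hasDerivAt (hv : HasDerivAt v v' x) (hε : 0 < ε) :
    ∀ᶠ s in 𝓝[>] 0, ∀ t, |t| ≤ s → v (x + t) ≤ v x + v' * t + ε * |t| := by
  obtain ⟨r, hr, hball⟩ := Metric.eventually_nhds_iff.1
    ((hasDerivAt_iff_isLittleO_nhds_zero.1 hv).bound hε)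
  filter_upwards [Ioo_mem_nhdsGT hr] with s hs t ht
  have := (le_abs_self _).trans (hball (by simpa using ht.trans_lt hs.2 : dist t 0 < r))
  simp only [smul_eq_mul, Real.norm_eq_abs] at this
  linarith

theorem AlmostSubdifferentiableAt.abs_hasDerivAt_sub_le (hv : AlmostSubdifferentiableAt v x ε δ)
    (hδ : 0 < δ) (hε : 0 < ε) (hd : HasDerivAt v v' x) (hvu : ∀ y, |v y - u y| ≤ ε * δ)
    (hu : ∀ t, |t| ≤ δ → u (x + t) ≤ u x + q * t + ε * |t|) : |v' - q| ≤ 8 * ε := by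
  obtain ⟨s, hs, hs0, hsδ⟩ := ((eventually_le_add_of_hasDerivAt hd hε).and
    (Ioc_mem_nhdsGT hδ)).exists
  obtain ⟨p, hp⟩ := hv (v x - ε * s) (sub_lt_self _ (mul_pos hε hs0))
  have hpv : |p - v'| ≤ 2 * ε + (v x - (v x - ε * s)) / s :=
    abs_sub_le_of_affine_le hs0 fun t ht => by linarith [hp t (ht.trans hsδ), hs t ht]
  have hpq : |p - q| ≤ 2 * ε + (u x + ε * δ - (v x - ε * s)) / δ :=
    abs_sub_le_of_affine_le hδ fun t ht => by
      linarith [hp t ht, hu t ht, abs_le.1 (hvu (x + t))]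
  have hdrop : (u x + ε * δ - (v x - ε * s)) / δ ≤ 3 * ε := by
    rw [div_le_iff₀ hδ]
    linarith [abs_le.1 (hvu x), mul_le_mul_of_nonneg_left hsδ hε.le]
  rw [sub_sub_cancel, mul_div_cancel_right₀ _ hs0.ne'] at hpv
  linarith [abs_sub_le v' p q, abs_sub_comm v' p]

theorem tendsto_deriv_of_almostSubdifferentiableAt {ι : Type*} {l : Filter ι} {v : ι → ℝ → ℝ}
    (hlim : TendstoUniformly v u l) (hu : DifferentiableAt ℝ u x)
    (hv : ∀ i, DifferentiableAt ℝ (v i) x)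
    (hsub : ∀ ε > 0, ∀ᶠ δ in 𝓝[>] 0, ∀ᶠ i in l, AlmostSubdifferentiableAt (v i) x ε δ) :
    Tendsto (fun i => deriv (v i) x) l (𝓝 (deriv u x)) := by
  refine Metric.tendsto_nhds.2 fun ξ hξ => ?_
  have hε : 0 < ξ / 9 := by positivity
  obtain ⟨δ, ⟨hsubδ, huδ⟩, hδ⟩ := ((hsub _ hε).and
    (eventually_le_add_of_hasDerivAt hu.hasDerivAt hε)).and self_mem_nhdsWithin |>.exists
  filter_upwards [hsubδ, Metric.tendstoUniformly_iff.1 hlim _ (mul_pos hε hδ)] with i hi hui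
  have hle := hi.abs_hasDerivAt_sub_le hδ hε (hv i).hasDerivAt
    (fun y => by rw [abs_sub_comm]; exact (hui y).le) huδ
  rw [Real.dist_eq]
  linarith

end DerivativeConvergence

section MaximalFunctionDerivative

variable {f : ℝ → ℝ} {b c m t x B δ ε κ ρ : ℝ}

theorem exists_lt_mAvg_left_or_right (hf : ∀ a b, IntervalIntegrable f volume a b)
    (h : c < uMax f x) : (∃ a < x, c < mAvg f a x) ∨ ∃ b > x, c < mAvg f x b := by
  obtain ⟨a, b, hab, hax, hxb, hm⟩ := exists_lt_mAvg_of_lt_uMax h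
  by_contra! H
  have hleft : mAvg f a x * (x - a) ≤ c * (x - a) := by
    rcases hax.eq_or_lt with rfl | hax
    · simp
    · exact mul_le_mul_of_nonneg_right (H.1 a hax) (sub_nonneg.2 hax.le)
  have hright : mAvg f x b * (b - x) ≤ c * (b - x) := by
    rcases hxb.eq_or_lt with rfl | hxb
    · simp
    · exact mul_le_mul_of_nonneg_right (H.2 b hxb) (sub_nonneg.2 hxb.le)
  have hsplit := intervalIntegral.integral_add_adjacent_intervals (hf a x).abs (hf x b).abs
  simp only [← mAvg_mul_sub] at hsplit
  exact hm.not_ge (le_of_mul_le_mul_right (by linarith) (sub_pos.2 hab))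

theorem integral_abs_le_of_abs_sub_le (h : ∀ s, |s| ≤ |t| → |(|f (x + s)| - |f x|)| ≤ κ)
    (hf : ∀ a b, IntervalIntegrable f volume a b) :
    ∫ s in x..x + t, |f s| ≤ |f x| * t + κ * |t| := by
  have hdiff : (∫ s in x..x + t, |f s|) - |f x| * t = ∫ s in x..x + t, (|f s| - |f x|) := by
    rw [intervalIntegral.integral_sub (hf _ _).abs intervalIntegrable_const]
    simp [mul_comm]
  have hbound : ‖∫ s in x..x + t, (|f s| - |f x|)‖ ≤ κ * |x + t - x| :=
    intervalIntegral.norm_integral_le_of_norm_le_const fun s hs => by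
      simpa using h (s - x)
        (by simpa using abs_sub_left_of_mem_uIcc (uIoc_subset_uIcc hs))
  rw [← hdiff, add_sub_cancel_left] at hbound
  linarith [(le_abs_self _).trans hbound]

theorem abs_mAvg_sub_div_le (hB : ∀ t, |f t| ≤ B) (hρ : 0 < ρ) (hb : ρ ≤ b - x) :
    |(mAvg f x b - |f x|) / (b - x)| ≤ B / ρ := by
  have hbx : 0 < b - x := hρ.trans_le hb
  have hxb : x < b := sub_pos.1 hbx
  rw [abs_div, abs_of_pos hbx]
  refine div_le_div₀ ((abs_nonneg _).trans (hB x)) (abs_le.2 ⟨?_, ?_⟩) hρ hb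
  · linarith [hB x, mAvg_nonneg f hxb.le]
  · linarith [abs_nonneg (f x), mAvg_le_of_forall_abs_le hxb fun t _ => hB t]

theorem mAvg_add_slope_mul_le (hB : ∀ t, |f t| ≤ B)
    (hf : ∀ a b, IntervalIntegrable f volume a b) (hρ : 0 < ρ) (hb : ρ < b - x) (hδ : δ ≤ ρ / 2)
    (hosc : ∀ s, |s| ≤ δ → |(|f (x + s)| - |f x|)| ≤ κ) (hε : κ + B / ρ * δ ≤ ε * (ρ / 2))
    (hε0 : 0 ≤ ε) (ht : |t| ≤ δ) :
    mAvg f x b + (mAvg f x b - |f x|) / (b - x) * t - ε * |t| ≤ mAvg f (x + t) b := by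
  set A := mAvg f x b
  set p := (A - |f x|) / (b - x)
  have hp_mul : p * (b - x) = A - |f x| := div_mul_cancel₀ _ (hρ.trans hb).ne'
  have hp_le : |p| ≤ B / ρ := abs_mAvg_sub_div_le hB hρ hb.le
  have hlen : ρ / 2 ≤ b - (x + t) := by linarith [le_abs_self t]
  have hint := integral_abs_le_of_abs_sub_le (fun s hs => hosc s (hs.trans ht)) hf
  have hsplit := intervalIntegral.integral_add_adjacent_intervals (hf x (x + t)).abs
    (hf (x + t) b).abs
  rw [← mAvg_mul_sub f (x + t), ← mAvg_mul_sub f x b] at hsplit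
  have herr : κ * |t| - p * t * t ≤ ε * |t| * (b - (x + t)) :=
    calc κ * |t| - p * t * t ≤ κ * |t| + |p| * |t| * |t| := by
          have := neg_abs_le (p * t * t)
          rw [abs_mul, abs_mul] at this
          linarith
      _ ≤ κ * |t| + B / ρ * δ * |t| := by
          gcongr
          exact (abs_nonneg _).trans hp_le
      _ = |t| * (κ + B / ρ * δ) := by ring
      _ ≤ |t| * (ε * (ρ / 2)) := by gcongr
      _ ≤ |t| * (ε * (b - (x + t))) := by gcongr
      _ = ε * |t| * (b - (x + t)) := by ring
  refine le_of_mul_le_mul_right ?_ ((half_pos hρ).trans_le hlen)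
  linear_combination hint - hsplit + herr + t * hp_mul

theorem exists_slope_of_lt_mAvg (hB : ∀ t, |f t| ≤ B)
    (hf : ∀ a b, IntervalIntegrable f volume a b) (hρ : 0 < ρ) (hδ : δ ≤ ρ / 2)
    (hosc : ∀ s, |s| ≤ δ → |(|f (x + s)| - |f x|)| ≤ κ) (hε : κ + B / ρ * δ ≤ ε * (ρ / 2))
    (hε0 : 0 ≤ ε) (hm : ∀ s, |s| ≤ ρ → |f (x + s)| ≤ c) (hxb : x < b) (hc : c < mAvg f x b) :
    ∃ p, ∀ t, |t| ≤ δ → c + p * t - ε * |t| ≤ uMax f (x + t) := by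
  have hb : ρ < b - x := by
    by_contra! hbρ
    obtain ⟨s, hs, hcs⟩ := exists_lt_abs_of_lt_mAvg hxb hc
    refine hcs.not_ge ?_
    simpa using hm (s - x) (abs_le.2 ⟨by linarith [hs.1], by linarith [hs.2]⟩)
  refine ⟨(mAvg f x b - |f x|) / (b - x), fun t ht => ?_⟩
  have hslope := mAvg_add_slope_mul_le hB hf hρ hb hδ hosc hε hε0 ht
  have hle := mAvg_le_uMax hB (by linarith [le_abs_self t] : x + t < b) le_rfl
    (by linarith [le_abs_self t])
  linarith

theorem almostSubdifferentiableAt_uMax (hB : ∀ t, |f t| ≤ B)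
    (hf : ∀ a b, IntervalIntegrable f volume a b) (hρ : 0 < ρ) (hδ : δ ≤ ρ / 2)
    (hosc : ∀ s, |s| ≤ δ → |(|f (x + s)| - |f x|)| ≤ κ) (hε : κ + B / ρ * δ ≤ ε * (ρ / 2))
    (hε0 : 0 ≤ ε) (hm : ∀ s, |s| ≤ ρ → |f (x + s)| ≤ m) (hmu : m < uMax f x) :
    AlmostSubdifferentiableAt (uMax f) x ε δ := by
  intro c hc
  suffices ∃ p, ∀ t, |t| ≤ δ → max c m + p * t - ε * |t| ≤ uMax f (x + t) from
    this.imp fun p hp t ht => by linarith [hp t ht, le_max_left c m]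
  have hmax : ∀ s, |s| ≤ ρ → |f (x + s)| ≤ max c m := fun s hs => le_max_of_le_right (hm s hs)
  rcases exists_lt_mAvg_left_or_right hf (max_lt hc hmu) with ⟨a, hax, ha⟩ | ⟨b, hxb, hb⟩
  · obtain ⟨p, hp⟩ := exists_slope_of_lt_mAvg (f := fun t => f (-t)) (x := -x) (b := -a)
      (fun t => hB (-t)) (fun a b => by simpa using (hf (-a) (-b)).comp_sub_left 0) hρ hδ
      (fun s hs => by simpa [add_comm] using hosc (-s) (by rwa [abs_neg])) hε hε0
      (fun s hs => by simpa only [neg_add, neg_neg] using hmax (-s) (by rwa [abs_neg]))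
      (neg_lt_neg hax) (by simpa [mAvg_comp_neg] using ha)
    refine ⟨-p, fun t ht => ?_⟩
    simpa [uMax_comp_neg, add_comm] using hp (-t) (by rwa [abs_neg])
  · exact exists_slope_of_lt_mAvg hB hf hρ hδ hosc hε hε0 hmax hxb hb

end MaximalFunctionDerivative

section UniformConvergence

variable {f g : ℝ → ℝ} {e x B η : ℝ} {ι : Type*} {l : Filter ι} {F : ι → ℝ → ℝ}

theorem abs_uMax_sub_uMax_le (hB : ∀ t, |f t| ≤ B) (hf : ∀ a b, IntervalIntegrable f volume a b)
    (hg : ∀ a b, IntervalIntegrable g volume a b) (h : ∀ t, |g t - f t| ≤ e) (x : ℝ) :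
    |uMax g x - uMax f x| ≤ e := by
  have hBg : ∀ t, |g t| ≤ B + e := fun t => by
    linarith [hB t, h t, abs_sub_abs_le_abs_sub (g t) (f t)]
  have hfg := uMax_le_uMax_add hBg hg hf (fun t => by rw [abs_sub_comm]; exact h t) x
  exact abs_sub_le_iff.2 ⟨by linarith [uMax_le_uMax_add hB hf hg h x], by linarith⟩

theorem tendstoUniformly_uMax (hB : ∀ t, |f t| ≤ B)
    (hf : ∀ a b, IntervalIntegrable f volume a b)
    (hF : ∀ i a b, IntervalIntegrable (F i) volume a b) (hlim : TendstoUniformly F f l) :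
    TendstoUniformly (fun i => uMax (F i)) (uMax f) l := by
  refine Metric.tendstoUniformly_iff.2 fun ε hε => ?_
  filter_upwards [Metric.tendstoUniformly_iff.1 hlim _ (half_pos hε)] with i hi x
  rw [dist_comm]
  exact (abs_uMax_sub_uMax_le hB hf (hF i) (fun t => by rw [abs_sub_comm]; exact (hi t).le)
    x).trans_lt (half_lt_self hε)

theorem eventually_abs_abs_sub_abs_le (hf : ContinuousAt f x) (hη : 0 < η) :
    ∀ᶠ ρ in 𝓝[>] 0, ∀ s, |s| ≤ ρ → |(|f (x + s)| - |f x|)| ≤ η := by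
  obtain ⟨r, hr, hball⟩ := Metric.continuousAt_iff.1 hf.abs η hη
  filter_upwards [Ioo_mem_nhdsGT hr] with ρ hρ s hs
  exact (hball (by simpa using hs.trans_lt hρ.2)).le

theorem eventually_almostSubdifferentiableAt_uMax (hB : ∀ t, |f t| ≤ B)
    (hf : ∀ a b, IntervalIntegrable f volume a b)
    (hF : ∀ i a b, IntervalIntegrable (F i) volume a b) (hlim : TendstoUniformly F f l)
    (hcont : ContinuousAt f x) (hx : |f x| < uMax f x) {ε : ℝ} (hε : 0 < ε) :
    ∀ᶠ δ in 𝓝[>] 0, ∀ᶠ i in l, AlmostSubdifferentiableAt (uMax (F i)) x ε δ := by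
  obtain ⟨η, hη, hηx⟩ : ∃ η > 0, |f x| + 4 * η = uMax f x :=
    ⟨(uMax f x - |f x|) / 4, by linarith, by ring⟩
  obtain ⟨ρ, hosc, hρ⟩ :=
    ((eventually_abs_abs_sub_abs_le hcont hη).and self_mem_nhdsWithin).exists
  replace hρ : 0 < ρ := hρ
  have hsmall : ∀ᶠ δ in 𝓝[>] 0, (B + η) / ρ * δ < ε * ρ / 4 :=
    (Continuous.continuousWithinAt (by fun_prop)).eventually_lt_const
      (by rw [mul_zero]; positivity)
  filter_upwards [eventually_abs_abs_sub_abs_le hcont (by positivity : 0 < ε * ρ / 8), hsmall,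
    Ioo_mem_nhdsGT (half_pos hρ)] with δ hoscδ hBδ hδ
  filter_upwards [Metric.tendstoUniformly_iff.1 hlim _ (lt_min hη (by positivity : 0 < ε * ρ / 16))]
    with i hi
  simp only [lt_min_iff, dist_comm (f _), Real.dist_eq] at hi
  have habs : ∀ t, |(|F i t| - |f t|)| ≤ |F i t - f t| := fun t => abs_abs_sub_abs_le _ _
  refine almostSubdifferentiableAt_uMax (B := B + η) (m := |f x| + 2 * η) (ρ := ρ)
    (κ := ε * ρ / 4) ?_ (hF i) hρ hδ.2.le ?_ (by linarith) hε.le ?_ ?_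
  · exact fun t => by linarith [hB t, abs_le.1 (habs t), hi t]
  · intro s hs
    linarith [abs_sub_le |F i (x + s)| |f (x + s)| |F i x|, abs_sub_le |f (x + s)| |f x| |F i x|,
      hoscδ s hs, habs (x + s), habs x, hi (x + s), hi x, abs_sub_comm |f x| |F i x|]
  · exact fun s hs => by
      linarith [abs_le.1 (hosc s hs), abs_le.1 (habs (x + s)), hi (x + s)]
  · linarith [abs_le.1 (abs_uMax_sub_uMax_le hB hf (hF i) (fun t => (hi t).1.le) x)]

theorem tendsto_deriv_uMax (hB : ∀ t, |f t| ≤ B) (hf : ∀ a b, IntervalIntegrable f volume a b)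
    (hF : ∀ i a b, IntervalIntegrable (F i) volume a b) (hlim : TendstoUniformly F f l)
    (hcont : ContinuousAt f x) (hx : |f x| < uMax f x) (hd : DifferentiableAt ℝ (uMax f) x)
    (hdF : ∀ i, DifferentiableAt ℝ (uMax (F i)) x) :
    Tendsto (fun i => deriv (uMax (F i)) x) l (𝓝 (deriv (uMax f) x)) :=
  tendsto_deriv_of_almostSubdifferentiableAt (tendstoUniformly_uMax hB hf hF hlim) hd hdF
    fun _ hε => eventually_almostSubdifferentiableAt_uMax hB hf hF hlim hcont hx hε

end UniformConvergence

section OneSidedLimits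

variable {f : ℝ → ℝ} {c x B L : ℝ}

theorem eventually_lt_mAvg_of_tendsto (hf : ∀ a b, IntervalIntegrable f volume a b)
    (hL : Tendsto f (𝓝[>] x) (𝓝 L)) (hc : c < |L|) : ∀ᶠ b in 𝓝[>] x, c < mAvg f x b := by
  obtain ⟨b₀, hb₀, hlt⟩ := mem_nhdsGT_iff_exists_Ioo_subset.1 (hL.abs.eventually_const_lt hc)
  filter_upwards [Ioo_mem_nhdsGT hb₀] with b hb
  obtain ⟨t, ht, hle⟩ := exists_abs_le_mAvg (hf x b) hb.1
  have hct : c < |f t| := hlt ⟨ht.1, ht.2.trans_lt hb.2⟩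
  exact hct.trans_le hle

theorem abs_le_uMax_of_tendsto_nhdsGT (hB : ∀ t, |f t| ≤ B)
    (hf : ∀ a b, IntervalIntegrable f volume a b) (hL : Tendsto f (𝓝[>] x) (𝓝 L)) :
    |L| ≤ uMax f x := by
  refine le_of_forall_lt fun c hc => ?_
  obtain ⟨b, hcb, hxb⟩ :=
    ((eventually_lt_mAvg_of_tendsto hf hL hc).and self_mem_nhdsWithin).exists
  exact hcb.trans_le (mAvg_le_uMax hB hxb le_rfl (le_of_lt hxb))

theorem abs_le_uMax_of_tendsto_nhdsLT (hB : ∀ t, |f t| ≤ B)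
    (hf : ∀ a b, IntervalIntegrable f volume a b) (hL : Tendsto f (𝓝[<] x) (𝓝 L)) :
    |L| ≤ uMax f x := by
  have hneg : Tendsto (fun t => f (-t)) (𝓝[>] (-x)) (𝓝 L) :=
    hL.comp (tendsto_neg_nhdsGT_neg (a := x))
  simpa [uMax_comp_neg] using abs_le_uMax_of_tendsto_nhdsGT (fun t => hB (-t))
    (fun a b => by simpa using (hf (-a) (-b)).comp_sub_left 0) hneg

theorem abs_le_ubar_of_tendsto_nhdsGT (hB : ∀ t, |f t| ≤ B)
    (hf : ∀ a b, IntervalIntegrable f volume a b) (hL : Tendsto f (𝓝[>] x) (𝓝 L)) :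
    |L| ≤ ubar f x := by
  have : Nonempty {h : ℝ // 0 < h} := ⟨⟨1, one_pos⟩⟩
  refine le_ciInf fun h => le_of_forall_lt fun c hc => ?_
  obtain ⟨b, hcb, hxb, hbh⟩ := ((eventually_lt_mAvg_of_tendsto hf hL hc).and
    (Ioc_mem_nhdsGT (lt_add_of_pos_right x h.2))).exists
  refine hcb.trans_le (le_csSup ⟨B, ?_⟩ ⟨x, b, hxb, le_rfl, hxb.le, by linarith, rfl⟩)
  rintro _ ⟨a', b', hab', -, -, -, rfl⟩
  exact mAvg_le_of_forall_abs_le hab' fun t _ => hB t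

end OneSidedLimits

namespace BVfun

variable {f g : ℝ → ℝ} {c x : ℝ}

theorem exists_abs_le (hf : BVfun f) : ∃ B, ∀ t, |f t| ≤ B := by
  refine ⟨|f 0| + (eVariationOn f univ).toReal, fun t => ?_⟩
  have := hf.dist_le (mem_univ t) (mem_univ 0)
  rw [Real.dist_eq] at this
  linarith [abs_sub_abs_le_abs_sub (f t) (f 0)]

theorem intervalIntegrable (hf : BVfun f) (a b : ℝ) : IntervalIntegrable f volume a b := by
  obtain ⟨p, q, hp, hq, rfl⟩ := hf.locallyBoundedVariationOn.exists_monotoneOn_sub_monotoneOn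
  exact (hp.mono (subset_univ _)).intervalIntegrable.sub
    (hq.mono (subset_univ _)).intervalIntegrable

theorem add (hf : BVfun f) (hg : BVfun g) : BVfun (f + g) :=
  ne_top_of_le_ne_top (ENNReal.add_ne_top.2 ⟨hf, hg⟩) (eVariationOn_add_le f g univ)

theorem sub (hf : BVfun f) (hg : BVfun g) : BVfun (f - g) :=
  ne_top_of_le_ne_top (ENNReal.add_ne_top.2 ⟨hf, hg⟩) (eVariationOn_sub_le f g univ)

theorem abs (hf : BVfun f) : BVfun fun t => |f t| :=
  LipschitzWith.comp_boundedVariationOn (f := fun t : ℝ => |t|) lipschitzWith_one_norm hf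

theorem measurable (hf : BVfun f) : Measurable f := by
  obtain ⟨p, q, hp, hq, rfl⟩ := hf.locallyBoundedVariationOn.exists_monotoneOn_sub_monotoneOn
  exact (monotoneOn_univ.1 hp).measurable.sub (monotoneOn_univ.1 hq).measurable

theorem abs_le_uMax (hf : BVfun f) (hr : ∀ x, ContinuousWithinAt f (Ici x) x) (x : ℝ) :
    |f x| ≤ uMax f x := by
  obtain ⟨B, hB⟩ := hf.exists_abs_le
  exact abs_le_uMax_of_tendsto_nhdsGT hB hf.intervalIntegrable
    ((hr x).mono_left (nhdsWithin_mono _ Ioi_subset_Ici_self))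

theorem eventually_abs_le_of_uMax_lt (hf : BVfun f) (hr : ∀ x, ContinuousWithinAt f (Ici x) x)
    (hc : uMax f x < c) : ∀ᶠ t in 𝓝 x, |f t| ≤ c := by
  obtain ⟨B, hB⟩ := hf.exists_abs_le
  have hleft : Tendsto f (𝓝[<] x) (𝓝 (f.leftLim x)) := hf.tendsto_leftLim x
  have hle := abs_le_uMax_of_tendsto_nhdsLT hB hf.intervalIntegrable hleft
  rw [← nhdsLT_sup_nhdsGE, eventually_sup]
  exact ⟨(hleft.abs.eventually_lt_const (hle.trans_lt hc)).mono fun _ => le_of_lt,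
    ((hr x).abs.eventually_lt_const ((hf.abs_le_uMax hr x).trans_lt hc)).mono fun _ => le_of_lt⟩

theorem continuous_uMax (hf : BVfun f) (hr : ∀ x, ContinuousWithinAt f (Ici x) x) :
    Continuous (uMax f) := by
  obtain ⟨B, hB⟩ := hf.exists_abs_le
  exact _root_.continuous_uMax hB hf.intervalIntegrable
    fun x c hc => hf.eventually_abs_le_of_uMax_lt hr hc

theorem bvfun_uMax (hf : BVfun f) (hle : ∀ x, |f x| ≤ uMax f x) : BVfun (uMax f) := by
  obtain ⟨B, hB⟩ := hf.exists_abs_le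
  exact ne_top_of_le_ne_top (ENNReal.add_ne_top.2 ⟨hf.abs, ENNReal.ofReal_ne_top⟩)
    ((peaksApproximatedBy_uMax hB).eVariationOn_le hf.abs hle fun x =>
      (uMax_le_of_forall_abs_le hB x).trans (le_add_of_nonneg_left (abs_nonneg _)))

end BVfun

section VariationOfMaximalFunction

variable {f g : ℝ → ℝ} {e : ℝ}

-- With `k = g - f`, the left-hand side is `max |g| (u - e)`.  As `|k| ≤ e`, the parts of `u ∓ f`
-- above `2 * e` do not affect it; the truncations have small variation.
theorem max_abs_sub_eq_add_max_truncation {u f g e : ℝ} (h : |g - f| ≤ e) :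
    max |g| (u - e) =
      u + max (max ((g - f) - min (u - f) (2 * e)) (-(g - f) - min (u + f) (2 * e))) (-e) := by
  grind

theorem eVariationOn_max_abs_sub_le (u : ℝ → ℝ) (h : ∀ t, |g t - f t| ≤ e) (s : Set ℝ) :
    eVariationOn (fun t => max |g t| (u t - e)) s ≤ eVariationOn u s
      + 2 * eVariationOn (g - f) s + eVariationOn (fun t => min (u t - f t) (2 * e)) s
      + eVariationOn (fun t => min (u t + f t) (2 * e)) s := by
  set P : ℝ → ℝ := fun t => min (u t - f t) (2 * e)
  set Q : ℝ → ℝ := fun t => min (u t + f t) (2 * e)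
  have hw : (fun t => max |g t| (u t - e)) =
      u + fun t => max (max ((g - f - P) t) ((-(g - f) - Q) t)) (-e) :=
    funext fun t => max_abs_sub_eq_add_max_truncation (h t)
  have hP : eVariationOn (g - f - P) s ≤ eVariationOn (g - f) s + eVariationOn P s :=
    eVariationOn_sub_le _ _ _
  have hQ : eVariationOn (-(g - f) - Q) s ≤ eVariationOn (g - f) s + eVariationOn Q s :=
    eVariationOn_neg (g - f) s ▸ eVariationOn_sub_le _ _ _
  have hconst : eVariationOn (fun _ : ℝ => -e) s = 0 :=
    eVariationOn.constant_on (by rintro _ ⟨_, -, rfl⟩ _ ⟨_, -, rfl⟩; rfl)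
  rw [hw]
  refine (eVariationOn_add_le _ _ _).trans ?_
  simp only [add_assoc]
  gcongr
  refine (eVariationOn_max_le _ _ _).trans ?_
  rw [hconst, add_zero]
  refine (eVariationOn_max_le _ _ _).trans ((add_le_add hP hQ).trans_eq ?_)
  ring

theorem eVariationOn_uMax_le (hf : BVfun f) (hfle : ∀ x, |f x| ≤ uMax f x) (hg : BVfun g)
    (hgle : ∀ x, |g x| ≤ uMax g x) (h : ∀ t, |g t - f t| ≤ e) :
    eVariationOn (uMax g) univ ≤ eVariationOn (uMax f) univ + 2 * eVariationOn (g - f) univ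
      + eVariationOn (fun t => min (uMax f t - f t) (2 * e)) univ
      + eVariationOn (fun t => min (uMax f t + f t) (2 * e)) univ + ENNReal.ofReal (4 * e) := by
  obtain ⟨B, hB⟩ := hf.exists_abs_le
  obtain ⟨C, hC⟩ := hg.exists_abs_le
  have hclose := fun x =>
    abs_le.1 (abs_uMax_sub_uMax_le hB hf.intervalIntegrable hg.intervalIntegrable h x)
  have hshift : BVfun fun t => uMax f t - e :=
    (LipschitzWith.id.sub (.const e)).comp_boundedVariationOn (hf.bvfun_uMax hfle)
  have hw : BVfun fun t => max |g t| (uMax f t - e) :=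
    ne_top_of_le_ne_top (ENNReal.add_ne_top.2 ⟨hg.abs, hshift⟩) (eVariationOn_max_le _ _ _)
  have hpeak := (peaksApproximatedBy_uMax hC).mono fun t => le_max_left |g t| (uMax f t - e)
  refine (hpeak.eVariationOn_le hw (d := 2 * e) (fun x => max_le (hgle x) (by linarith [hclose x]))
    fun x => by linarith [hclose x, le_max_right |g x| (uMax f x - e)]).trans ?_
  rw [← mul_assoc, show (2 : ℝ) * 2 = 4 by norm_num]
  gcongr
  exact eVariationOn_max_abs_sub_le (uMax f) h univ

theorem tendsto_eVariationOn_uMax {ι : Type*} {l : Filter ι} {F : ι → ℝ → ℝ} {e : ι → ℝ}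
    (hf : BVfun f) (hfle : ∀ x, |f x| ≤ uMax f x) (hF : ∀ i, BVfun (F i))
    (hFle : ∀ i x, |F i x| ≤ uMax (F i) x) (he : Tendsto e l (𝓝 0))
    (hFe : ∀ i t, |F i t - f t| ≤ e i)
    (hvar : Tendsto (fun i => eVariationOn (F i - f) univ) l (𝓝 0)) :
    Tendsto (fun i => eVariationOn (uMax (F i)) univ) l (𝓝 (eVariationOn (uMax f) univ)) := by
  obtain ⟨B, hB⟩ := hf.exists_abs_le
  have hpt : ∀ x ∈ univ, Tendsto (fun i => uMax (F i) x) l (𝓝 (uMax f x)) := fun x _ =>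
    tendsto_iff_dist_tendsto_zero.2 (squeeze_zero (fun _ => dist_nonneg) (fun i =>
      abs_uMax_sub_uMax_le hB hf.intervalIntegrable (hF i).intervalIntegrable (hFe i) x) he)
  have h2e : Tendsto (fun i => 2 * e i) l (𝓝 0) := by simpa using he.const_mul 2
  have h4e : Tendsto (fun i => 4 * e i) l (𝓝 0) := by simpa using he.const_mul 4
  have hu := hf.bvfun_uMax hfle
  have hsub := (tendsto_eVariationOn_min_zero (hu.sub hf)
    fun x _ => sub_nonneg.2 ((le_abs_self _).trans (hfle x))).comp h2e
  have hadd := (tendsto_eVariationOn_min_zero (hu.add hf)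
    fun x _ => neg_le_iff_add_nonneg.1 ((neg_le_abs _).trans (hfle x))).comp h2e
  have hbound := ((((tendsto_const_nhds (x := eVariationOn (uMax f) univ)).add
    (ENNReal.Tendsto.const_mul hvar (.inr ENNReal.ofNat_ne_top) (a := 2))).add hsub).add hadd).add
    (ENNReal.tendsto_ofReal h4e)
  simp only [mul_zero, add_zero, ENNReal.ofReal_zero] at hbound
  exact tendsto_order.2 ⟨fun c hc => eVariationOn.lowerSemicontinuous_aux hpt hc, fun c hc =>
    (hbound.eventually_lt_const hc).mono fun i hi =>
      (eVariationOn_uMax_le hf hfle (hF i) (hFle i) (hFe i)).trans_lt hi⟩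

end VariationOfMaximalFunction

section NullImages

variable {h u : ℝ → ℝ} {s : Set ℝ}

theorem volume_image_eq_zero_of_lipschitzOnWith {K : NNReal} (hh : LipschitzOnWith K h s)
    (hs : volume s = 0) : volume (h '' s) = 0 := by
  have hle := hh.hausdorffMeasure_image_le (d := 1) zero_le_one
  rw [hausdorffMeasure_real, hs, mul_zero] at hle
  exact le_antisymm hle zero_le

theorem volume_image_eq_zero_of_locally_lipschitzOnWith
    (hh : ∀ x ∈ s, ∃ K, ∃ t ∈ 𝓝 x, LipschitzOnWith K h t) (hs : volume s = 0) :
    volume (h '' s) = 0 := by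
  choose! K t ht hL using hh
  obtain ⟨c, hcs, hc, hcov⟩ := TopologicalSpace.countable_cover_nhdsWithin (s := s) (f := t)
    fun x hx => mem_nhdsWithin_of_mem_nhds (ht x hx)
  have hsub : h '' s ⊆ ⋃ x ∈ c, h '' (t x ∩ s) := by
    rintro _ ⟨y, hy, rfl⟩
    obtain ⟨x, hx, hyx⟩ := mem_iUnion₂.1 (hcov hy)
    exact mem_iUnion₂.2 ⟨x, hx, y, ⟨hyx, hy⟩, rfl⟩
  refine measure_mono_null hsub ((measure_biUnion_null_iff hc).2 fun x hx => ?_)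
  exact volume_image_eq_zero_of_lipschitzOnWith ((hL x (hcs hx)).mono inter_subset_left)
    (measure_mono_null inter_subset_right hs)

theorem volume_image_eq_zero_of_hasDerivAt_zero (hs : ∀ x ∈ s, HasDerivAt h 0 x) :
    volume (h '' s) = 0 := by
  refine addHaar_image_eq_zero_of_det_fderivWithin_eq_zero volume (f' := fun _ => 0)
    (fun x hx => ?_) fun _ _ => by simp
  simpa using (hs x hx).hasFDerivAt.hasFDerivWithinAt (s := s)

theorem lipschitzOnWith_of_hasUnitSpeedOn (hh : HasUnitSpeedOn h s) : LipschitzOnWith 1 h s := by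
  intro x hx y hy
  wlog hxy : x ≤ y generalizing x y
  · rw [edist_comm, edist_comm x]
    exact this hy hx (le_of_not_ge hxy)
  calc edist (h x) (h y) ≤ eVariationOn h (s ∩ Icc x y) :=
        eVariationOn.edist_le h ⟨hx, left_mem_Icc.2 hxy⟩ ⟨hy, right_mem_Icc.2 hxy⟩
    _ = (1 : NNReal) * edist x y := by
        rw [hh hx hy, edist_comm, edist_dist, Real.dist_eq, abs_of_nonneg (sub_nonneg.2 hxy)]
        simp

theorem exists_lipschitzWith_comp_variationOnFromTo (hu : LocallyBoundedVariationOn u univ)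
    (a : ℝ) : ∃ H : ℝ → ℝ, LipschitzWith 1 H ∧ ∀ x, H (variationOnFromTo u univ a x) = u x := by
  have hlip := lipschitzOnWith_of_hasUnitSpeedOn
    (has_unit_speed_naturalParameterization u hu (mem_univ a))
  obtain ⟨H, hH, hHV⟩ := hlip.extend_real
  refine ⟨H, hH, fun x => ?_⟩
  rw [← hHV ⟨x, mem_univ x, rfl⟩]
  exact edist_eq_zero.1 (edist_naturalParameterization_eq_zero hu (mem_univ a) (mem_univ x))

theorem eventually_nhdsGE_or_nhdsLE_le_imp_eq {v : ℝ} (hd : deriv h v ≠ 0) :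
    (∀ᶠ w in 𝓝[≥] v, h w ≤ h v → w = v) ∨ ∀ᶠ w in 𝓝[≤] v, h w ≤ h v → w = v := by
  have hslope := hasDerivAt_iff_tendsto_slope.1 (differentiableAt_of_deriv_ne_zero hd).hasDerivAt
  rcases hd.lt_or_gt with hneg | hpos
  · right
    filter_upwards [nhdsWithin_le_nhds (eventually_nhdsWithin_iff.1
      (hslope.eventually_lt_const hneg)), self_mem_nhdsWithin] with w hw hwv hle
    by_contra hne
    exact hle.not_gt ((slope_neg_iff_of_le hwv).1 (slope_comm h v w ▸ hw hne))
  · left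
    filter_upwards [nhdsWithin_le_nhds (eventually_nhdsWithin_iff.1
      (hslope.eventually_const_lt hpos)), self_mem_nhdsWithin] with w hw hwv hle
    by_contra hne
    exact hle.not_gt ((slope_pos_iff_of_le hwv).1 (hw hne))

theorem exists_ne_eq_of_frequently_le {H V : ℝ → ℝ} {x : ℝ} (hV : Monotone V)
    (hx : ContinuousAt V x) (hd : deriv H (V x) ≠ 0)
    (hl : ∃ᶠ t in 𝓝[<] x, H (V t) ≤ H (V x)) (hr : ∃ᶠ t in 𝓝[>] x, H (V t) ≤ H (V x)) :
    ∃ t, t ≠ x ∧ V t = V x := by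
  rcases eventually_nhdsGE_or_nhdsLE_le_imp_eq hd with h | h
  · have hmem : Tendsto V (𝓝[>] x) (𝓝[≥] (V x)) := tendsto_nhdsWithin_iff.2
      ⟨hx.tendsto.mono_left nhdsWithin_le_nhds,
        eventually_nhdsWithin_of_forall fun t ht => hV (le_of_lt ht)⟩
    obtain ⟨t, ht, hiff, hxt⟩ := (hr.and_eventually
      ((hmem.eventually h).and self_mem_nhdsWithin)).exists
    exact ⟨t, ne_of_gt hxt, hiff ht⟩
  · have hmem : Tendsto V (𝓝[<] x) (𝓝[≤] (V x)) := tendsto_nhdsWithin_iff.2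
      ⟨hx.tendsto.mono_left nhdsWithin_le_nhds,
        eventually_nhdsWithin_of_forall fun t ht => hV (le_of_lt ht)⟩
    obtain ⟨t, ht, hiff, hxt⟩ := (hl.and_eventually
      ((hmem.eventually h).and self_mem_nhdsWithin)).exists
    exact ⟨t, ne_of_lt hxt, hiff ht⟩

theorem exists_rat_eq_of_monotone {V : ℝ → ℝ} {x t : ℝ} (hV : Monotone V) (ht : t ≠ x)
    (h : V t = V x) : ∃ q : ℚ, V q = V x := by
  rcases ht.lt_or_gt with hlt | hlt
  · obtain ⟨q, htq, hqx⟩ := exists_rat_btwn hlt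
    exact ⟨q, (hV hqx.le).antisymm (h ▸ hV htq.le)⟩
  · obtain ⟨q, hxq, hqt⟩ := exists_rat_btwn hlt
    exact ⟨q, (h ▸ hV hqt.le).antisymm (hV hxq.le)⟩

theorem volume_image_eq_zero_of_frequently_le (hu : LocallyBoundedVariationOn u univ)
    (hs : ∀ x ∈ s, (∃ᶠ t in 𝓝[<] x, u t ≤ u x) ∧ ∃ᶠ t in 𝓝[>] x, u t ≤ u x) :
    volume (u '' s) = 0 := by
  obtain ⟨H, hH, hHV⟩ := exists_lipschitzWith_comp_variationOnFromTo hu 0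
  set V := variationOnFromTo u univ 0
  have hV : Monotone V := monotoneOn_univ.1 (variationOnFromTo.monotoneOn hu (mem_univ 0))
  have hdisc : volume (u '' {x | ¬ContinuousAt V x}) = 0 :=
    (hV.countable_not_continuousAt.image u).measure_zero _
  have hnondiff : volume (H '' {v | ¬DifferentiableAt ℝ H v}) = 0 :=
    volume_image_eq_zero_of_lipschitzOnWith hH.lipschitzOnWith
      (ae_iff.1 hH.ae_differentiableAt_real)
  have hcrit : volume (H '' {v | HasDerivAt H 0 v}) = 0 :=
    volume_image_eq_zero_of_hasDerivAt_zero fun _ hv => hv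
  have hrat : volume (H '' range fun q : ℚ => V q) = 0 :=
    ((countable_range _).image H).measure_zero _
  refine measure_mono_null ?_ (measure_union_null (measure_union_null hdisc hnondiff)
    (measure_union_null hcrit hrat))
  rintro _ ⟨x, hx, rfl⟩
  by_cases hcont : ContinuousAt V x
  swap
  · exact .inl (.inl ⟨x, hcont, rfl⟩)
  rw [← hHV x]
  by_cases hdiff : DifferentiableAt ℝ H (V x)
  swap
  · exact .inl (.inr ⟨V x, hdiff, rfl⟩)
  by_cases hzero : deriv H (V x) = 0
  · exact .inr (.inl ⟨V x, hzero ▸ hdiff.hasDerivAt, rfl⟩)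
  obtain ⟨hl, hr⟩ := hs x hx
  simp only [← hHV] at hl hr
  obtain ⟨t, htx, htV⟩ := exists_ne_eq_of_frequently_le hV hcont hzero hl hr
  exact .inr (.inr ⟨V x, exists_rat_eq_of_monotone hV htx htV, rfl⟩)

end NullImages

section ContactSet

variable {f : ℝ → ℝ} {x B : ℝ}

theorem frequently_nhdsGT_abs_le_of_uMax_le (hB : ∀ t, |f t| ≤ B)
    (hf : ∀ a b, IntervalIntegrable f volume a b) (h : uMax f x ≤ |f x|) :
    ∃ᶠ t in 𝓝[>] x, |f t| ≤ |f x| := by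
  refine (nhdsGT_basis x).frequently_iff.2 fun b hb => ?_
  obtain ⟨c, hxc, hcb⟩ := exists_between hb
  obtain ⟨t, ht, hle⟩ := exists_abs_le_mAvg (hf x c) hxc
  exact ⟨t, ⟨ht.1, ht.2.trans_lt hcb⟩,
    hle.trans ((mAvg_le_uMax hB hxc le_rfl hxc.le).trans h)⟩

theorem frequently_nhdsLT_abs_le_of_uMax_le (hB : ∀ t, |f t| ≤ B)
    (hf : ∀ a b, IntervalIntegrable f volume a b) (h : uMax f x ≤ |f x|) :
    ∃ᶠ t in 𝓝[<] x, |f t| ≤ |f x| := by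
  have hneg := frequently_nhdsGT_abs_le_of_uMax_le (f := fun t => f (-t)) (x := -x)
    (fun t => hB (-t)) (fun a b => by simpa using (hf (-a) (-b)).comp_sub_left 0)
    (by simpa [uMax_comp_neg] using h)
  exact (tendsto_neg_nhdsGT_neg (a := x)).frequently (by simpa using hneg)

end ContactSet

namespace BVfun

variable {f : ℝ → ℝ}

theorem countable_not_continuousAt (hf : BVfun f) : {x | ¬ContinuousAt f x}.Countable := by
  obtain ⟨p, q, hp, hq, rfl⟩ := hf.locallyBoundedVariationOn.exists_monotoneOn_sub_monotoneOn
  refine ((monotoneOn_univ.1 hp).countable_not_continuousAt.union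
    (monotoneOn_univ.1 hq).countable_not_continuousAt).mono fun x hx => ?_
  by_contra h
  simp only [mem_union, mem_ofPred_eq, not_or, not_not] at h
  exact hx (h.1.sub h.2)

theorem ae_continuousAt (hf : BVfun f) : ∀ᵐ x, ContinuousAt f x :=
  ae_iff.2 (hf.countable_not_continuousAt.measure_zero _)

theorem volume_uMax_image_contact_eq_zero (hf : BVfun f) (hle : ∀ x, |f x| ≤ uMax f x) :
    volume (uMax f '' {x | uMax f x ≤ |f x|}) = 0 := by
  obtain ⟨B, hB⟩ := hf.exists_abs_le
  have heq : EqOn (uMax f) (fun t => |f t|) {x | uMax f x ≤ |f x|} := fun x hx =>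
    le_antisymm hx (hle x)
  rw [heq.image_eq]
  exact volume_image_eq_zero_of_frequently_le hf.abs.locallyBoundedVariationOn fun x hx =>
    ⟨frequently_nhdsLT_abs_le_of_uMax_le hB hf.intervalIntegrable hx,
      frequently_nhdsGT_abs_le_of_uMax_le hB hf.intervalIntegrable hx⟩

theorem volume_uMax_image_not_differentiableAt_eq_zero (hf : BVfun f)
    (hle : ∀ x, |f x| ≤ uMax f x) :
    volume (uMax f '' {x | |f x| < uMax f x ∧ ¬DifferentiableAt ℝ (uMax f) x}) = 0 := by
  obtain ⟨B, hB⟩ := hf.exists_abs_le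
  set N := {x | |f x| < uMax f x ∧ ¬DifferentiableAt ℝ (uMax f) x}
  have hN : volume N = 0 := measure_mono_null (fun x hx => hx.2)
    (ae_iff.1 (hf.bvfun_uMax hle).locallyBoundedVariationOn.ae_differentiableAt)
  have hcont : volume (uMax f '' (N ∩ {x | ContinuousAt f x})) = 0 :=
    volume_image_eq_zero_of_locally_lipschitzOnWith
      (fun x hx => exists_lipschitzOnWith_uMax hB hf.intervalIntegrable hx.2 hx.1.1)
      (measure_mono_null inter_subset_left hN)
  have hdisc : volume (uMax f '' {x | ¬ContinuousAt f x}) = 0 :=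
    (hf.countable_not_continuousAt.image _).measure_zero _
  refine measure_mono_null ?_ (measure_union_null hcont hdisc)
  rw [← image_union]
  exact image_mono fun x hx => (em (ContinuousAt f x)).imp (fun h => ⟨hx, h⟩) id

theorem measurableSet_abs_lt_uMax (hf : BVfun f) (hr : ∀ x, ContinuousWithinAt f (Ici x) x) :
    MeasurableSet {x | |f x| < uMax f x} :=
  measurableSet_lt hf.measurable.abs (hf.continuous_uMax hr).measurable

theorem eVariationOn_uMax_le_lintegral (hf : BVfun f)
    (hr : ∀ x, ContinuousWithinAt f (Ici x) x) :
    eVariationOn (uMax f) univ ≤ ∫⁻ x in {x | |f x| < uMax f x}, ‖deriv (uMax f) x‖ₑ := by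
  have hle := hf.abs_le_uMax hr
  set D := {x | |f x| < uMax f x} ∩ {x | DifferentiableAt ℝ (uMax f) x}
  have hD : MeasurableSet D :=
    (hf.measurableSet_abs_lt_uMax hr).inter (measurableSet_of_differentiableAt ℝ (uMax f))
  have hnull : volume (uMax f '' Dᶜ) = 0 := by
    refine measure_mono_null ?_ (measure_union_null (hf.volume_uMax_image_contact_eq_zero hle)
      (hf.volume_uMax_image_not_differentiableAt_eq_zero hle))
    rw [← image_union]
    refine image_mono fun x hx => (le_or_gt (uMax f x) |f x|).imp id fun hlt => ?_
    exact ⟨hlt, fun hdiff => hx ⟨hlt, hdiff⟩⟩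
  exact (eVariationOn_univ_le_lintegral_enorm_deriv (hf.continuous_uMax hr) hD (fun x hx => hx.2)
    hnull).trans (lintegral_mono_set inter_subset_left)

theorem setIntegral_abs_deriv_uMax_eq (hf : BVfun f)
    (hr : ∀ x, ContinuousWithinAt f (Ici x) x) :
    ∫ x in {x | |f x| < uMax f x}, |deriv (uMax f) x| = varOn (uMax f) univ := by
  have hu := hf.bvfun_uMax (hf.abs_le_uMax hr)
  rw [setIntegral_abs_deriv_eq_toReal_lintegral, varOn]
  congr 1
  exact ((setLIntegral_le_lintegral _ _).trans (lintegral_enorm_deriv_le_eVariationOn hu)).antisymm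
    (hf.eVariationOn_uMax_le_lintegral hr)

end BVfun

namespace BVfun

variable {f g : ℝ → ℝ}

theorem rightLim_ae_eq (hf : BVfun f) : f.rightLim =ᵐ[volume] f :=
  hf.ae_continuousAt.mono fun _ hx => hx.continuousWithinAt.rightLim_eq

theorem uMax_rightLim (hf : BVfun f) : uMax f.rightLim = uMax f :=
  uMax_congr_ae hf.rightLim_ae_eq

theorem bvfun_rightLim (hf : BVfun f) : BVfun f.rightLim :=
  BoundedVariationOn.rightLim hf

theorem continuousWithinAt_rightLim_Ici (hf : BVfun f) (x : ℝ) :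
    ContinuousWithinAt f.rightLim (Ici x) x :=
  hf.continuousWithinAt_rightLim

theorem rightLim_sub (hf : BVfun f) (hg : BVfun g) :
    (f - g).rightLim = f.rightLim - g.rightLim :=
  funext fun x => tendsto_nhds_unique ((hf.sub hg).tendsto_rightLim x)
    ((hf.tendsto_rightLim x).sub (hg.tendsto_rightLim x))

theorem abs_rightLim_le_ubar (hf : BVfun f) (x : ℝ) : |f.rightLim x| ≤ ubar f x := by
  obtain ⟨B, hB⟩ := hf.exists_abs_le
  exact abs_le_ubar_of_tendsto_nhdsGT hB hf.intervalIntegrable (hf.tendsto_rightLim x)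

theorem integrable_deriv_uMax (hf : BVfun f) : Integrable (deriv (uMax f)) := by
  rw [← hf.uMax_rightLim]
  exact integrable_deriv_of_boundedVariationOn (hf.bvfun_rightLim.bvfun_uMax
    (hf.bvfun_rightLim.abs_le_uMax hf.continuousWithinAt_rightLim_Ici))

theorem abs_le_bvNorm (hf : BVfun f) (x : ℝ) : |f x| ≤ bvNorm f := by
  refine ge_of_tendsto ((hf.tendsto_atBot_limUnder.abs).add_const (varOn f univ))
    (Eventually.of_forall fun y => ?_)
  have hdist : |f x - f y| ≤ varOn f univ := hf.dist_le (mem_univ x) (mem_univ y)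
  linarith [abs_sub_abs_le_abs_sub (f x) (f y)]

theorem eVariationOn_le_bvNorm (hf : BVfun f) :
    eVariationOn f univ ≤ ENNReal.ofReal (bvNorm f) := by
  rw [← ENNReal.ofReal_toReal hf]
  exact ENNReal.ofReal_le_ofReal (le_add_of_nonneg_left (abs_nonneg _))

theorem abs_rightLim_le_bvNorm (hf : BVfun f) (x : ℝ) : |f.rightLim x| ≤ bvNorm f :=
  le_of_tendsto (hf.tendsto_rightLim x).abs (Eventually.of_forall hf.abs_le_bvNorm)

theorem eVariationOn_rightLim_le_bvNorm (hf : BVfun f) :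
    eVariationOn f.rightLim univ ≤ ENNReal.ofReal (bvNorm f) :=
  (eVariationOn.eVariationOn_rightLim_le isOpen_univ).trans hf.eVariationOn_le_bvNorm

end BVfun

theorem tendsto_setIntegral_abs_deriv_uMax_sub {ι : Type*} {l : Filter ι}
    [l.IsCountablyGenerated] [Countable ι] {f : ℝ → ℝ} {F : ι → ℝ → ℝ} {e : ι → ℝ}
    (hf : BVfun f) (hfr : ∀ x, ContinuousWithinAt f (Ici x) x) (hF : ∀ i, BVfun (F i))
    (hFr : ∀ i x, ContinuousWithinAt (F i) (Ici x) x) (he : Tendsto e l (𝓝 0))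
    (hFe : ∀ i t, |F i t - f t| ≤ e i)
    (hvar : ∀ i, eVariationOn (F i - f) univ ≤ ENNReal.ofReal (e i)) :
    Tendsto (fun i => ∫ x in {x | |f x| < uMax f x},
      |deriv (uMax (F i)) x - deriv (uMax f) x|) l (𝓝 0) := by
  obtain ⟨B, hB⟩ := hf.exists_abs_le
  have hFle := fun i => (hF i).abs_le_uMax (hFr i)
  have hu : BVfun (uMax f) := hf.bvfun_uMax (hf.abs_le_uMax hfr)
  have hU : ∀ i, BVfun (uMax (F i)) := fun i => (hF i).bvfun_uMax (hFle i)
  have hunif : TendstoUniformly F f l := Metric.tendstoUniformly_iff.2 fun ε hε =>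
    (he.eventually_lt_const hε).mono fun i hi t => by
      rw [dist_comm]
      exact (hFe i t).trans_lt hi
  have hvar0 : Tendsto (fun i => eVariationOn (F i - f) univ) l (𝓝 0) :=
    tendsto_of_tendsto_of_tendsto_of_le_of_le tendsto_const_nhds
      (by simpa using ENNReal.tendsto_ofReal he) (fun _ => zero_le) hvar
  refine tendsto_integral_norm_sub_of_integral_norm_le
    (m := fun i => varOn (uMax (F i)) univ) (fun i => (hF i).integrable_deriv_uMax.restrict)
    hf.integrable_deriv_uMax.restrict ?_
    (fun i => setIntegral_abs_deriv_le_varOn (hU i) _) ?_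
  · rw [ae_restrict_iff' (hf.measurableSet_abs_lt_uMax hfr)]
    filter_upwards [hf.ae_continuousAt, hu.locallyBoundedVariationOn.ae_differentiableAt,
      ae_all_iff.2 fun i => (hU i).locallyBoundedVariationOn.ae_differentiableAt]
      with x hcont hd hdF hx
    exact tendsto_deriv_uMax hB hf.intervalIntegrable (fun i => (hF i).intervalIntegrable) hunif
      hcont hx hd hdF
  · simp only [Real.norm_eq_abs, hf.setIntegral_abs_deriv_uMax_eq hfr]
    exact (ENNReal.tendsto_toReal hu).comp
      (tendsto_eVariationOn_uMax hf (hf.abs_le_uMax hfr) hF hFle he hFe hvar0)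

theorem stmt17 (f : ℝ → ℝ) (hf : BVfun f) (fj : ℕ → ℝ → ℝ) (hfj : ∀ j, BVfun (fj j))
    (hconv : Tendsto (fun j => bvNorm (fj j - f)) atTop (𝓝 0)) :
    Tendsto (fun j => ∫ x in {x : ℝ | ubar f x < uMax f x},
        |deriv (uMax (fj j)) x - deriv (uMax f) x|) atTop (𝓝 0) := by
  have hsub : ∀ j, (fj j - f).rightLim = (fj j).rightLim - f.rightLim := fun j =>
    (hfj j).rightLim_sub hf
  have key := tendsto_setIntegral_abs_deriv_uMax_sub hf.bvfun_rightLim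
    hf.continuousWithinAt_rightLim_Ici (fun j => (hfj j).bvfun_rightLim)
    (fun j => (hfj j).continuousWithinAt_rightLim_Ici) hconv
    (fun j t => by simpa only [hsub, Pi.sub_apply] using ((hfj j).sub hf).abs_rightLim_le_bvNorm t)
    (fun j => hsub j ▸ ((hfj j).sub hf).eVariationOn_rightLim_le_bvNorm)
  simp only [hf.uMax_rightLim, (hfj _).uMax_rightLim] at key
  refine squeeze_zero (fun _ => integral_nonneg fun _ => abs_nonneg _) (fun j => ?_) key
  have hint := (hfj j).integrable_deriv_uMax.sub hf.integrable_deriv_uMax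
  exact setIntegral_mono_set hint.abs.integrableOn (ae_of_all _ fun _ => abs_nonneg _)
    (Eventually.of_forall fun x hx => (hf.abs_rightLim_le_ubar x).trans_lt hx)
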